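/- Let 𝒜 be a weakly idempotent complete exact category and (𝒳,𝒴) a hereditary complete cotorsion pair with ω = 𝒳∩𝒴 contravariantly finite, so that (CoFib_ω, Fib_ω, Weq_ω) is a model structure on 𝒜. This model structure is exact in the sense of Gillespie if and only if 𝒜 has enough projective objects and ω equals the class 𝒫 of projective objects of 𝒜. -/

import Mathlib

open CategoryTheory Limits ZeroObject

universe v u

/-- An exact structure (Quillen exact category) on an additive category `𝒜`:
a class of conflations (kernel-cokernel pairs), closed under isomorphisms,
with identities deflations, deflations closed under composition and stable
under pullback, and inflations stable under pushout. -/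
structure ExactStructure (𝒜 : Type u) [Category.{v} 𝒜] [Preadditive 𝒜]
    [HasZeroObject 𝒜] [HasBinaryBiproducts 𝒜] : Type (max u v) where
  conflation : ∀ ⦃X Y Z : 𝒜⦄, (X ⟶ Y) → (Y ⟶ Z) → Prop
  comp_zero : ∀ {X Y Z : 𝒜} {i : X ⟶ Y} {d : Y ⟶ Z}, conflation i d → i ≫ d = 0
  isKernel : ∀ {X Y Z : 𝒜} {i : X ⟶ Y} {d : Y ⟶ Z} (h : conflation i d),
    Nonempty (IsLimit (KernelFork.ofι i (comp_zero h)))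
  isCokernel : ∀ {X Y Z : 𝒜} {i : X ⟶ Y} {d : Y ⟶ Z} (h : conflation i d),
    Nonempty (IsColimit (CokernelCofork.ofπ d (comp_zero h)))
  conflation_iso : ∀ {X Y Z X' Y' Z' : 𝒜} {i : X ⟶ Y} {d : Y ⟶ Z}
    (eX : X ≅ X') (eY : Y ≅ Y') (eZ : Z ≅ Z') {i' : X' ⟶ Y'} {d' : Y' ⟶ Z'},
    conflation i d → i ≫ eY.hom = eX.hom ≫ i' → d ≫ eZ.hom = eY.hom ≫ d' →
    conflation i' d'
  id_deflation : ∀ X : 𝒜, conflation (0 : (0 : 𝒜) ⟶ X) (𝟙 X)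
  deflation_comp : ∀ {X Y Z X' W : 𝒜} {i : X ⟶ Y} {d : Y ⟶ Z} {i' : X' ⟶ Z} {d' : Z ⟶ W},
    conflation i d → conflation i' d' → ∃ (K : 𝒜) (k : K ⟶ Y), conflation k (d ≫ d')
  pullback_deflation : ∀ {X Y Z Z' : 𝒜} {i : X ⟶ Y} {d : Y ⟶ Z},
    conflation i d → ∀ (f : Z' ⟶ Z),
    ∃ (Y' : 𝒜) (f' : Y' ⟶ Y) (d' : Y' ⟶ Z') (K : 𝒜) (k : K ⟶ Y'),
      IsPullback f' d' d f ∧ conflation k d'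
  pushout_inflation : ∀ {X Y Z X' : 𝒜} {i : X ⟶ Y} {d : Y ⟶ Z},
    conflation i d → ∀ (f : X ⟶ X'),
    ∃ (Y' : 𝒜) (f' : Y ⟶ Y') (i' : X' ⟶ Y') (Q : 𝒜) (q : Y' ⟶ Q),
      IsPushout i f f' i' ∧ conflation i' q

variable {𝒜 : Type u} [Category.{v} 𝒜] [Preadditive 𝒜] [HasZeroObject 𝒜]
  [HasBinaryBiproducts 𝒜]

/-- `f` is an inflation: the first map of some conflation. -/
def IsInflation (E : ExactStructure 𝒜) {X Y : 𝒜} (i : X ⟶ Y) : Prop :=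
  ∃ (Z : 𝒜) (d : Y ⟶ Z), E.conflation i d

/-- `f` is a deflation: the second map of some conflation. -/
def IsDeflation (E : ExactStructure 𝒜) {Y Z : 𝒜} (d : Y ⟶ Z) : Prop :=
  ∃ (X : 𝒜) (i : X ⟶ Y), E.conflation i d

/-- `𝒜` is weakly idempotent complete: every split epimorphism is a deflation. -/
def IsWIC (E : ExactStructure 𝒜) : Prop :=
  ∀ {X Y : 𝒜} (d : X ⟶ Y) (s : Y ⟶ X), s ≫ d = 𝟙 Y → IsDeflation E d

/-- `Ext¹(A,B) = 0`: every conflation `B ⟶ M ⟶ A` splits. -/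
def Ext1IsZero (E : ExactStructure 𝒜) (A B : 𝒜) : Prop :=
  ∀ {M : 𝒜} (i : B ⟶ M) (d : M ⟶ A), E.conflation i d → ∃ r : M ⟶ B, i ≫ r = 𝟙 B

/-- `(X, Y)` is a cotorsion pair: each class is the `Ext¹`-orthogonal of the other. -/
def IsCotorsionPair (E : ExactStructure 𝒜) (X Y : Set 𝒜) : Prop :=
  (∀ A : 𝒜, A ∈ X ↔ ∀ B ∈ Y, Ext1IsZero E A B) ∧
  (∀ B : 𝒜, B ∈ Y ↔ ∀ A ∈ X, Ext1IsZero E A B)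

/-- Completeness of a cotorsion pair: every object has approximation sequences. -/
def IsCompleteCP (E : ExactStructure 𝒜) (X Y : Set 𝒜) : Prop :=
  ∀ A : 𝒜,
    (∃ (Y₀ X₀ : 𝒜) (i : Y₀ ⟶ X₀) (d : X₀ ⟶ A), E.conflation i d ∧ X₀ ∈ X ∧ Y₀ ∈ Y) ∧
    (∃ (Y₁ X₁ : 𝒜) (i : A ⟶ Y₁) (d : Y₁ ⟶ X₁), E.conflation i d ∧ X₁ ∈ X ∧ Y₁ ∈ Y)

/-- Heredity of a cotorsion pair: `X` is closed under kernels of deflations and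
`Y` is closed under cokernels of inflations. -/
def IsHereditaryCP (E : ExactStructure 𝒜) (X Y : Set 𝒜) : Prop :=
  (∀ {K A B : 𝒜} (i : K ⟶ A) (d : A ⟶ B), E.conflation i d → A ∈ X → B ∈ X → K ∈ X) ∧
  (∀ {K A B : 𝒜} (i : K ⟶ A) (d : A ⟶ B), E.conflation i d → K ∈ Y → A ∈ Y → B ∈ Y)

/-- `t : W ⟶ B` is a right `ω`-approximation of `B`. -/
def IsRightApprox (ω : Set 𝒜) {W B : 𝒜} (t : W ⟶ B) : Prop :=
  W ∈ ω ∧ ∀ (W' : 𝒜), W' ∈ ω → ∀ g : W' ⟶ B, ∃ h : W' ⟶ W, h ≫ t = g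

/-- `ω` is contravariantly finite: every object has a right `ω`-approximation. -/
def IsContravariantlyFinite (ω : Set 𝒜) : Prop :=
  ∀ B : 𝒜, ∃ (W : 𝒜) (t : W ⟶ B), IsRightApprox ω t

/-- A full additive subcategory closed under isomorphisms and direct summands,
viewed as a class of objects. -/
def AdditivelyClosed (S : Set 𝒜) : Prop :=
  (0 : 𝒜) ∈ S ∧ (∀ A B : 𝒜, A ∈ S → B ∈ S → (A ⊞ B) ∈ S) ∧
  (∀ {A B : 𝒜}, (A ≅ B) → A ∈ S → B ∈ S) ∧
  (∀ {A B : 𝒜} (i : A ⟶ B) (r : B ⟶ A), i ≫ r = 𝟙 A → B ∈ S → A ∈ S)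

/-- `CoFib_ω`: inflations with cokernel in `X`. -/
def CoFibO (E : ExactStructure 𝒜) (X : Set 𝒜) : MorphismProperty 𝒜 :=
  fun _ B f => ∃ (Z : 𝒜) (d : B ⟶ Z), E.conflation f d ∧ Z ∈ X

/-- `Fib_ω`: the `ω`-epic morphisms. -/
def FibO (ω : Set 𝒜) : MorphismProperty 𝒜 :=
  fun A B f => ∀ (W : 𝒜), W ∈ ω → ∀ g : W ⟶ B, ∃ h : W ⟶ A, h ≫ f = g

/-- `Weq_ω`: morphisms `f : A ⟶ B` such that for some `W ∈ ω` and `t : W ⟶ B`,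
`(f,t) : A ⊞ W ⟶ B` is a deflation with kernel in `Y`. -/
def WeqO (E : ExactStructure 𝒜) (ω Y : Set 𝒜) : MorphismProperty 𝒜 :=
  fun A B f => ∃ (W : 𝒜) (_ : W ∈ ω) (t : W ⟶ B) (K : 𝒜) (k : K ⟶ A ⊞ W),
    E.conflation k (biprod.desc f t) ∧ K ∈ Y

/-- `TCoFib_ω`: split monomorphisms with cokernel in `ω`. -/
def TCoFibO (E : ExactStructure 𝒜) (ω : Set 𝒜) : MorphismProperty 𝒜 :=
  fun A B f => (∃ r : B ⟶ A, f ≫ r = 𝟙 A) ∧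
    ∃ (Z : 𝒜) (d : B ⟶ Z), E.conflation f d ∧ Z ∈ ω

/-- `TFib_ω`: deflations with kernel in `Y`. -/
def TFibO (E : ExactStructure 𝒜) (Y : Set 𝒜) : MorphismProperty 𝒜 :=
  fun A _ f => ∃ (K : 𝒜) (k : K ⟶ A), E.conflation k f ∧ K ∈ Y

/-- `g` is a retract of `f`. -/
def IsRetractMor {A' B' A B : 𝒜} (g : A' ⟶ B') (f : A ⟶ B) : Prop :=
  ∃ (φ₁ : A' ⟶ A) (ψ₁ : A ⟶ A') (φ₂ : B' ⟶ B) (ψ₂ : B ⟶ B'),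
    φ₁ ≫ ψ₁ = 𝟙 A' ∧ φ₂ ≫ ψ₂ = 𝟙 B' ∧ φ₁ ≫ f = g ≫ φ₂ ∧ f ≫ ψ₂ = ψ₁ ≫ g

/-- A (closed, Quillen) model structure, given by classes of cofibrations,
fibrations and weak equivalences. -/
structure IsModelStructure (C F W : MorphismProperty 𝒜) : Prop where
  weq_comp : ∀ {X Y Z : 𝒜} (f : X ⟶ Y) (g : Y ⟶ Z), W f → W g → W (f ≫ g)
  weq_cancel_left : ∀ {X Y Z : 𝒜} (f : X ⟶ Y) (g : Y ⟶ Z), W f → W (f ≫ g) → W g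
  weq_cancel_right : ∀ {X Y Z : 𝒜} (f : X ⟶ Y) (g : Y ⟶ Z), W g → W (f ≫ g) → W f
  retract_cofib : ∀ {A' B' A B : 𝒜} (g : A' ⟶ B') (f : A ⟶ B),
    IsRetractMor g f → C f → C g
  retract_fib : ∀ {A' B' A B : 𝒜} (g : A' ⟶ B') (f : A ⟶ B),
    IsRetractMor g f → F f → F g
  retract_weq : ∀ {A' B' A B : 𝒜} (g : A' ⟶ B') (f : A ⟶ B),
    IsRetractMor g f → W f → W g
  lifting_left : ∀ {A B X Y : 𝒜} (i : A ⟶ B) (p : X ⟶ Y) (a : A ⟶ X) (b : B ⟶ Y),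
    C i → W i → F p → a ≫ p = i ≫ b → ∃ s : B ⟶ X, i ≫ s = a ∧ s ≫ p = b
  lifting_right : ∀ {A B X Y : 𝒜} (i : A ⟶ B) (p : X ⟶ Y) (a : A ⟶ X) (b : B ⟶ Y),
    C i → F p → W p → a ≫ p = i ≫ b → ∃ s : B ⟶ X, i ≫ s = a ∧ s ≫ p = b
  fact_left : ∀ {A B : 𝒜} (f : A ⟶ B), ∃ (Z : 𝒜) (i : A ⟶ Z) (p : Z ⟶ B),
    i ≫ p = f ∧ C i ∧ W i ∧ F p
  fact_right : ∀ {A B : 𝒜} (f : A ⟶ B), ∃ (Z : 𝒜) (j : A ⟶ Z) (q : Z ⟶ B),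
    j ≫ q = f ∧ C j ∧ F q ∧ W q

/-- An object is cofibrant if `0 ⟶ X` is a cofibration. -/
def Cofibrant (C : MorphismProperty 𝒜) (A : 𝒜) : Prop := C (0 : (0 : 𝒜) ⟶ A)

/-- An object is fibrant if `X ⟶ 0` is a fibration. -/
def Fibrant (F : MorphismProperty 𝒜) (A : 𝒜) : Prop := F (0 : A ⟶ (0 : 𝒜))

/-- An object is trivial if `0 ⟶ X` is a weak equivalence. -/
def TrivialObj (W : MorphismProperty 𝒜) (A : 𝒜) : Prop := W (0 : (0 : 𝒜) ⟶ A)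

/-- `P` is projective in the exact category. -/
def IsProjObj (E : ExactStructure 𝒜) (P : 𝒜) : Prop :=
  ∀ {A B : 𝒜} (d : A ⟶ B), IsDeflation E d → ∀ g : P ⟶ B, ∃ h : P ⟶ A, h ≫ d = g

/-- The exact category has enough projective objects. -/
def HasEnoughProj (E : ExactStructure 𝒜) : Prop :=
  ∀ X : 𝒜, ∃ (P : 𝒜) (d : P ⟶ X), IsProjObj E P ∧ IsDeflation E d

/-- Cofibrations are exactly the inflations with cofibrant cokernel. -/
def CofibsAreInflWithCofibCoker (E : ExactStructure 𝒜) (C : MorphismProperty 𝒜) : Prop :=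
  ∀ {A B : 𝒜} (f : A ⟶ B),
    C f ↔ ∃ (Z : 𝒜) (d : B ⟶ Z), E.conflation f d ∧ Cofibrant C Z

/-- Fibrations are exactly the deflations with fibrant kernel. -/
def FibsAreDeflWithFibKer (E : ExactStructure 𝒜) (F : MorphismProperty 𝒜) : Prop :=
  ∀ {A B : 𝒜} (f : A ⟶ B),
    F f ↔ ∃ (K : 𝒜) (k : K ⟶ A), E.conflation k f ∧ Fibrant F K

/-- Trivial fibrations are exactly the deflations with trivially fibrant kernel. -/
def TrivFibsAreDeflWithTrivFibKer (E : ExactStructure 𝒜)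
    (F W : MorphismProperty 𝒜) : Prop :=
  ∀ {A B : 𝒜} (f : A ⟶ B),
    (F f ∧ W f) ↔ ∃ (K : 𝒜) (k : K ⟶ A), E.conflation k f ∧ Fibrant F K ∧ TrivialObj W K

/-- Every cofibration is an inflation. -/
def CofibsAreInfl (E : ExactStructure 𝒜) (C : MorphismProperty 𝒜) : Prop :=
  ∀ {A B : 𝒜} (f : A ⟶ B), C f → IsInflation E f

/-- Every trivial fibration is a deflation. -/
def TrivFibsAreDefl (E : ExactStructure 𝒜) (F W : MorphismProperty 𝒜) : Prop :=
  ∀ {A B : 𝒜} (f : A ⟶ B), F f → W f → IsDeflation E f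

/-- An exact model structure in the sense of Gillespie. -/
def IsExactModelStr (E : ExactStructure 𝒜) (C F W : MorphismProperty 𝒜) : Prop :=
  IsModelStructure C F W ∧ CofibsAreInflWithCofibCoker E C ∧ FibsAreDeflWithFibKer E F

/-- A weakly projective model structure: every object is fibrant, cofibrations are
exactly the inflations with cofibrant cokernel, and trivial fibrations are exactly
the deflations with trivially fibrant kernel. -/
def IsWeaklyProjModelStr (E : ExactStructure 𝒜) (C F W : MorphismProperty 𝒜) : Prop :=
  IsModelStructure C F W ∧ (∀ A : 𝒜, Fibrant F A) ∧
    CofibsAreInflWithCofibCoker E C ∧ TrivFibsAreDeflWithTrivFibKer E F W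

/-- A projective model structure: an exact model structure with every object fibrant. -/
def IsProjectiveModelStr (E : ExactStructure 𝒜) (C F W : MorphismProperty 𝒜) : Prop :=
  IsExactModelStr E C F W ∧ (∀ A : 𝒜, Fibrant F A)

/-- A class of objects is thick: closed under direct summands and two-out-of-three
in conflations. -/
def IsThick (E : ExactStructure 𝒜) (S : Set 𝒜) : Prop :=
  (∀ {A B : 𝒜} (i : A ⟶ B) (r : B ⟶ A), i ≫ r = 𝟙 A → B ∈ S → A ∈ S) ∧
  (∀ {X Y Z : 𝒜} (i : X ⟶ Y) (d : Y ⟶ Z), E.conflation i d →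
    ((X ∈ S → Y ∈ S → Z ∈ S) ∧ (X ∈ S → Z ∈ S → Y ∈ S) ∧ (Y ∈ S → Z ∈ S → X ∈ S)))

/-!
Every object is fibrant for `FibO ω`, so exactness of the model structure amounts to the equality of
`FibO ω` with the class of deflations. If it holds, then the objects of `ω = X ∩ Y` are projective,
and factoring `0 ⟶ B` into a trivial cofibration `0 ⟶ Z` followed by a fibration yields a deflation
from an object of `ω` onto `Z` and hence onto `B`; a projective `B` is then a summand of an object
of `ω`.

Conversely, suppose that `ω` consists of the projectives and that there are enough of them. By
Schanuel's lemma the condition `Ker (f, t) ∈ Y` defining weak equivalences does not depend on the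
deflation `(f, t)` with source in `A ⊞ ω`. For composable `f` and `g` these kernels can be chosen to
form a conflation `Ker (f, t) ⟶ Ker (f ≫ g, _) ⟶ Ker (g, u)`, which reduces two-out-of-three to
closure properties of `Y`. The only one that is not part of heredity is closure under kernels of
deflations, and it holds because `ω` is projective.
-/

section ExactCategories

variable {E : ExactStructure 𝒜}

namespace ExactStructure.conflation

variable {A B C T : 𝒜} {i : A ⟶ B} {d : B ⟶ C}

lemma mono (h : E.conflation i d) : Mono i :=
  ⟨fun _ _ e => Fork.IsLimit.hom_ext (E.isKernel h).some e⟩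

lemma epi (h : E.conflation i d) : Epi d :=
  ⟨fun _ _ e => Cofork.IsColimit.hom_ext (E.isCokernel h).some e⟩

lemma exists_lift (h : E.conflation i d) (f : T ⟶ B) (hf : f ≫ d = 0) :
    ∃ g : T ⟶ A, g ≫ i = f :=
  let ⟨g, hg⟩ := KernelFork.IsLimit.lift' (E.isKernel h).some f hf
  ⟨g, hg⟩

lemma exists_desc (h : E.conflation i d) (f : B ⟶ T) (hf : i ≫ f = 0) :
    ∃ g : C ⟶ T, d ≫ g = f :=
  let ⟨g, hg⟩ := CokernelCofork.IsColimit.desc' (E.isCokernel h).some f hf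
  ⟨g, hg⟩

lemma nonempty_kernel_iso {A' : 𝒜} {i' : A' ⟶ B} (h : E.conflation i d)
    (h' : E.conflation i' d) : Nonempty (A ≅ A') :=
  ⟨(E.isKernel h).some.conePointUniqueUpToIso (E.isKernel h').some⟩

lemma of_mono {A' : 𝒜} (h : E.conflation i d) {k : A' ⟶ B} (hk : Mono k) (hkd : k ≫ d = 0)
    (g : A ⟶ A') (hg : g ≫ k = i) : E.conflation k d := by
  obtain ⟨g', hg'⟩ := h.exists_lift k hkd
  have := h.mono
  let e : A ≅ A' :=
    { hom := g
      inv := g'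
      hom_inv_id := by rw [← cancel_mono i, Category.assoc, hg', hg, Category.id_comp]
      inv_hom_id := by rw [← cancel_mono k, Category.assoc, hg, hg', Category.id_comp] }
  exact E.conflation_iso e (Iso.refl B) (Iso.refl C) h (by simp [e, hg]) (by simp)

lemma of_epi {C' : 𝒜} (h : E.conflation i d) {q : B ⟶ C'} (hq : Epi q) (hiq : i ≫ q = 0)
    (g : C' ⟶ C) (hg : q ≫ g = d) : E.conflation i q := by
  obtain ⟨g', hg'⟩ := h.exists_desc q hiq
  have := h.epi
  let e : C ≅ C' :=
    { hom := g'
      inv := g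
      hom_inv_id := by rw [← cancel_epi d, reassoc_of% hg', hg, Category.comp_id]
      inv_hom_id := by rw [← cancel_epi q, reassoc_of% hg, hg', Category.comp_id] }
  exact E.conflation_iso (Iso.refl A) (Iso.refl B) e h (by simp) (by simp [e, hg'])

lemma exists_of_isPullback {B' C' : 𝒜} (h : E.conflation i d) {f : C' ⟶ C} {f' : B' ⟶ B}
    {d' : B' ⟶ C'} (pb : IsPullback f' d' d f) :
    ∃ k : A ⟶ B', E.conflation k d' ∧ k ≫ f' = i := by
  obtain ⟨B'', f'', d'', K, k'', pb'', h''⟩ := E.pullback_deflation h f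
  have h' : E.conflation (k'' ≫ (pb''.isoIsPullback _ _ pb).hom) d' :=
    E.conflation_iso (Iso.refl K) (pb''.isoIsPullback _ _ pb) (Iso.refl C') h'' (by simp) (by simp)
  set k' := k'' ≫ (pb''.isoIsPullback _ _ pb).hom
  obtain ⟨k, hkf, hkd⟩ := pb.exists_lift i 0 (by simp [E.comp_zero h])
  obtain ⟨g, hg⟩ := h.exists_lift (k' ≫ f') (by
    rw [Category.assoc, pb.w, reassoc_of% (E.comp_zero h'), Limits.zero_comp])
  have : Mono (k ≫ f') := by rw [hkf]; exact h.mono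
  refine ⟨k, h'.of_mono (mono_of_mono k f') hkd g (pb.hom_ext ?_ ?_), hkf⟩
  · rw [Category.assoc, hkf, hg]
  · rw [Category.assoc, hkd, E.comp_zero h', Limits.comp_zero]

lemma exists_of_isPushout {A' B' : 𝒜} (h : E.conflation i d) {f : A ⟶ A'} {f' : B ⟶ B'}
    {i' : A' ⟶ B'} (po : IsPushout i f f' i') :
    ∃ q : B' ⟶ C, E.conflation i' q ∧ f' ≫ q = d := by
  obtain ⟨B'', f'', i'', Q, q'', po'', h''⟩ := E.pushout_inflation h f
  have h' : E.conflation i' ((po.isoIsPushout _ _ po'').hom ≫ q'') :=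
    E.conflation_iso (Iso.refl A') (po.isoIsPushout _ _ po'').symm (Iso.refl Q) h''
      (by simp) (by simp)
  set q' := (po.isoIsPushout _ _ po'').hom ≫ q''
  obtain ⟨q, hfq, hiq⟩ := po.exists_desc d 0 (by simp [E.comp_zero h])
  obtain ⟨g, hg⟩ := h.exists_desc (f' ≫ q') (by
    rw [po.w_assoc, E.comp_zero h', Limits.comp_zero])
  have : Epi (f' ≫ q) := by rw [hfq]; exact h.epi
  refine ⟨q, h'.of_epi (epi_of_epi f' q) hiq g (po.hom_ext ?_ ?_), hfq⟩
  · rw [reassoc_of% hfq, hg]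
  · rw [reassoc_of% hiq, E.comp_zero h', Limits.zero_comp]

/-- The short complex underlying a conflation, which gives access to Mathlib's splittings. -/
abbrev shortComplex (h : E.conflation i d) : ShortComplex 𝒜 := .mk i d (E.comp_zero h)

lemma exists_splitting_of_section (h : E.conflation i d) (s : C ⟶ B) (hs : s ≫ d = 𝟙 C) :
    ∃ σ : h.shortComplex.Splitting, σ.s = s := by
  have := h.mono
  obtain ⟨r, hr⟩ := h.exists_lift (𝟙 B - d ≫ s) (by simp [hs])
  refine ⟨⟨r, s, ?_, hs, by simp [hr]⟩, rfl⟩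
  rw [← cancel_mono i, Category.assoc, hr]
  simp [reassoc_of% (E.comp_zero h)]

lemma exists_splitting_of_retraction (h : E.conflation i d) (r : B ⟶ A) (hr : i ≫ r = 𝟙 A) :
    ∃ σ : h.shortComplex.Splitting, σ.r = r := by
  have := h.epi
  obtain ⟨s, hs⟩ := h.exists_desc (𝟙 B - r ≫ i) (by simp [reassoc_of% hr])
  refine ⟨⟨r, s, hr, ?_, by simp [hs]⟩, rfl⟩
  rw [← cancel_epi d, reassoc_of% hs]
  simp [E.comp_zero h]

lemma nonempty_retract_kernel {A' B' C' : 𝒜} {i' : A' ⟶ B'} {d' : B' ⟶ C'}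
    (h : E.conflation i d) (h' : E.conflation i' d') (hd : IsRetractMor d' d) :
    Nonempty (Retract A' A) := by
  obtain ⟨φ₁, ψ₁, φ₂, ψ₂, hφψ₁, -, hφ, hψ⟩ := hd
  have := h'.mono
  obtain ⟨x, hx⟩ := h.exists_lift (i' ≫ φ₁) (by
    rw [Category.assoc, hφ, reassoc_of% (E.comp_zero h'), Limits.zero_comp])
  obtain ⟨y, hy⟩ := h'.exists_lift (i ≫ ψ₁) (by
    rw [Category.assoc, ← hψ, reassoc_of% (E.comp_zero h), Limits.zero_comp])
  refine ⟨⟨x, y, ?_⟩⟩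
  rw [← cancel_mono i', Category.assoc, hy, reassoc_of% hx, hφψ₁, Category.comp_id,
    Category.id_comp]

lemma nonempty_retract_cokernel {A' B' C' : 𝒜} {i' : A' ⟶ B'} {d' : B' ⟶ C'}
    (h : E.conflation i d) (h' : E.conflation i' d') (hi : IsRetractMor i' i) :
    Nonempty (Retract C' C) := by
  obtain ⟨φ₁, ψ₁, φ₂, ψ₂, -, hφψ₂, hφ, hψ⟩ := hi
  have := h'.epi
  obtain ⟨x, hx⟩ := h'.exists_desc (φ₂ ≫ d) (by
    rw [← reassoc_of% hφ, E.comp_zero h, Limits.comp_zero])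
  obtain ⟨y, hy⟩ := h.exists_desc (ψ₂ ≫ d') (by
    rw [reassoc_of% hψ, E.comp_zero h', Limits.comp_zero])
  refine ⟨⟨x, y, ?_⟩⟩
  rw [← cancel_epi d', reassoc_of% hx, hy, reassoc_of% hφψ₂, Category.comp_id]

lemma nonempty_retract_of_zero (h : E.conflation (0 : (0 : 𝒜) ⟶ B) d) :
    Nonempty (Retract B C) :=
  let ⟨s, hs⟩ := h.exists_desc (𝟙 B) (by simp)
  ⟨⟨d, s, hs⟩⟩

lemma biprod_map_id {k : A ⟶ B} {p : B ⟶ C} (h : E.conflation k p) (D : 𝒜) :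
    E.conflation (k ≫ biprod.inl) (biprod.map p (𝟙 D)) := by
  have pb : IsPullback (biprod.fst : B ⊞ D ⟶ B) (biprod.map p (𝟙 D)) p biprod.fst := by
    refine IsPullback.mk' (by simp) (fun T a b h₁ h₂ => ?_) fun T a b hab =>
      ⟨biprod.lift a (b ≫ biprod.snd), by simp, by ext <;> simp [hab]⟩
    exact biprod.hom_ext _ _ h₁ (by simpa using h₂ =≫ biprod.snd)
  obtain ⟨k', hk', hk'fst⟩ := h.exists_of_isPullback pb
  have : k' = k ≫ biprod.inl := by
    ext
    · simp [hk'fst]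
    · simpa using E.comp_zero hk' =≫ biprod.snd
  rwa [this] at hk'

lemma map_id_biprod {j : A ⟶ B} {q : B ⟶ C} (h : E.conflation j q) (D : 𝒜) :
    E.conflation (biprod.map j (𝟙 D)) (biprod.fst ≫ q) := by
  have po : IsPushout j (biprod.inl : A ⟶ A ⊞ D) biprod.inl (biprod.map j (𝟙 D)) := by
    refine IsPushout.mk' (by simp) (fun T a b h₁ h₂ => ?_) fun T a b hab =>
      ⟨biprod.desc a (biprod.inr ≫ b), by simp, by ext <;> simp [hab]⟩
    exact biprod.hom_ext' _ _ h₁ (by simpa using biprod.inr ≫= h₂)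
  obtain ⟨q', hq', hinl⟩ := h.exists_of_isPushout po
  have : q' = biprod.fst ≫ q := by
    ext
    · simp [hinl]
    · simpa using biprod.inr ≫= E.comp_zero hq'
  rwa [this] at hq'

lemma desc_zero (h : E.conflation i d) :
    E.conflation (i ≫ biprod.inl) (biprod.desc d (0 : (0 : 𝒜) ⟶ C)) := by
  let e : B ≅ B ⊞ (0 : 𝒜) :=
    { hom := biprod.inl
      inv := biprod.fst
      inv_hom_id := by ext; simp }
  exact E.conflation_iso (Iso.refl A) e (Iso.refl C) h (by simp [e]) (by simp [e])

end ExactStructure.conflation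

open ExactStructure

lemma conflation_id_zero (A : 𝒜) : E.conflation (𝟙 A) (0 : A ⟶ 0) := by
  obtain ⟨q, hq, -⟩ := (E.id_deflation 0).exists_of_isPushout (IsPushout.zero_left A).flip
  rwa [(isZero_zero 𝒜).eq_of_tgt q 0] at hq

lemma conflation_inl_snd (A B : 𝒜) :
    E.conflation (biprod.inl : A ⟶ A ⊞ B) (biprod.snd : A ⊞ B ⟶ B) := by
  obtain ⟨k, hk, hkfst⟩ := (conflation_id_zero (E := E) A).exists_of_isPullback
    (IsPullback.of_has_biproduct A B)
  have : k = biprod.inl := by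
    ext
    · simp [hkfst]
    · simp [E.comp_zero hk]
  rwa [this] at hk

lemma conflation_of_splitting {S : ShortComplex 𝒜} (σ : S.Splitting) : E.conflation S.f S.g :=
  E.conflation_iso (Iso.refl S.X₁) σ.isoBinaryBiproduct.symm (Iso.refl S.X₃)
    (conflation_inl_snd S.X₁ S.X₃) (by simp) (by ext <;> simp)

lemma IsWIC.isInflation (hwic : IsWIC E) {A B : 𝒜} (i : A ⟶ B) (r : B ⟶ A) (h : i ≫ r = 𝟙 A) :
    IsInflation E i := by
  obtain ⟨K, k, hk⟩ := hwic r i h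
  obtain ⟨σ, rfl⟩ := hk.exists_splitting_of_section i h
  let τ : (ShortComplex.mk σ.s σ.r σ.s_r).Splitting :=
    { r := r
      s := k
      f_r := h
      s_g := σ.f_r
      id := by rw [add_comm]; exact σ.id }
  exact ⟨K, σ.r, conflation_of_splitting τ⟩

/-! ### Composition and cancellation of deflations -/

lemma isDeflation_of_iso {A B : 𝒜} (e : A ≅ B) : IsDeflation E e.hom :=
  ⟨0, 0, E.conflation_iso (Iso.refl _) (Iso.refl _) e (E.id_deflation A) (by simp) (by simp)⟩

lemma isInflation_of_iso {A B : 𝒜} (e : A ≅ B) : IsInflation E e.hom :=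
  ⟨0, 0, E.conflation_iso (Iso.refl _) e (Iso.refl _) (conflation_id_zero A) (by simp) (by simp)⟩

namespace IsDeflation

variable {A B C : 𝒜}

lemma comp {f : A ⟶ B} {g : B ⟶ C} (hf : IsDeflation E f) (hg : IsDeflation E g) :
    IsDeflation E (f ≫ g) :=
  let ⟨_, _, hf⟩ := hf
  let ⟨_, _, hg⟩ := hg
  E.deflation_comp hf hg

lemma desc_left (hwic : IsWIC E) {h : A ⟶ C} (hh : IsDeflation E h) (g : B ⟶ C) :
    IsDeflation E (biprod.desc h g) := by
  obtain ⟨K, k, hk⟩ := hh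
  have hmap : IsDeflation E (biprod.map h (𝟙 B)) := ⟨K, _, hk.biprod_map_id B⟩
  have hdesc : IsDeflation E (biprod.desc (𝟙 C) g) := hwic _ biprod.inl (by simp)
  have hcomp : biprod.map h (𝟙 B) ≫ biprod.desc (𝟙 C) g = biprod.desc h g := by ext <;> simp
  exact hcomp ▸ hmap.comp hdesc

lemma desc_right (hwic : IsWIC E) {h : B ⟶ C} (hh : IsDeflation E h) (g : A ⟶ C) :
    IsDeflation E (biprod.desc g h) := by
  have hcomp : (biprod.braiding A B).hom ≫ biprod.desc h g = biprod.desc g h := by ext <;> simp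
  exact hcomp ▸ (isDeflation_of_iso _).comp (hh.desc_left hwic g)

/- `A` is a summand of the kernel `M` of `(0, g)`, and `g` is the pushout of `(0, g)` along the
projection of `M` onto the complementary summand. -/
lemma of_desc_zero (hwic : IsWIC E) {g : B ⟶ C}
    (h : IsDeflation E (biprod.desc (0 : A ⟶ C) g)) : IsDeflation E g := by
  obtain ⟨M, m, hm⟩ := h
  have := hm.mono
  obtain ⟨s, hs⟩ := hm.exists_lift (biprod.inl : A ⟶ A ⊞ B) (by simp)
  obtain ⟨K, k, hk⟩ := hwic (m ≫ biprod.fst) s (by simp [reassoc_of% hs])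
  obtain ⟨σ, rfl⟩ := hk.exists_splitting_of_section s (by simp [reassoc_of% hs])
  have po : IsPushout m σ.r (biprod.snd : A ⊞ B ⟶ B) (k ≫ m ≫ biprod.snd) := by
    refine IsPushout.mk' ?_ (fun T a b hab _ => (cancel_epi _).1 hab) fun T a b hab => ?_
    · simpa [reassoc_of% hs] using (σ.id =≫ (m ≫ biprod.snd)).symm
    · have ha : biprod.inl ≫ a = 0 := by
        rw [← hs, Category.assoc, hab, reassoc_of% σ.s_r, Limits.zero_comp]
      have ha' : biprod.snd ≫ biprod.inr ≫ a = a := by ext <;> simp [ha]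
      refine ⟨biprod.inr ≫ a, ha', ?_⟩
      rw [Category.assoc, Category.assoc, ha', hab, reassoc_of% σ.f_r]
  obtain ⟨q, hq, hq'⟩ := hm.exists_of_isPushout po
  have : q = g := by simpa using biprod.inr ≫= hq'
  exact ⟨_, _, this ▸ hq⟩

lemma of_comp (hwic : IsWIC E) (f : A ⟶ B) (g : B ⟶ C) (h : IsDeflation E (f ≫ g)) :
    IsDeflation E g := by
  have hshear : (Biprod.unipotentUpper (-f)).hom ≫ biprod.desc (f ≫ g) g =
      biprod.desc (0 : A ⟶ C) g := by
    ext <;> simp [Biprod.ofComponents]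
  exact of_desc_zero hwic (hshear ▸ (isDeflation_of_iso _).comp (h.desc_left hwic g))

end IsDeflation

namespace ExactStructure.conflation

variable {A B C D : 𝒜}

lemma exists_conflation_comp {K L : 𝒜} {k : K ⟶ A} {f : A ⟶ B} {l : L ⟶ B} {g : B ⟶ C}
    (hf : E.conflation k f) (hg : E.conflation l g) :
    ∃ (M : 𝒜) (m : M ⟶ A) (a : K ⟶ M) (b : M ⟶ L),
      E.conflation m (f ≫ g) ∧ E.conflation a b ∧ a ≫ m = k ∧ m ≫ f = b ≫ l := by
  obtain ⟨K', k', hk'⟩ := E.deflation_comp hf hg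
  obtain ⟨M, m, b, _, _, pb, -⟩ := E.pullback_deflation hf l
  obtain ⟨a, ha, ham⟩ := hf.exists_of_isPullback pb
  have := hg.mono
  have hm : Mono m := ⟨fun u v huv => pb.hom_ext huv (by
    rw [← cancel_mono l, Category.assoc, Category.assoc, ← pb.w, reassoc_of% huv])⟩
  obtain ⟨b', hb'⟩ := hg.exists_lift (k' ≫ f) (by simpa using E.comp_zero hk')
  refine ⟨M, m, a, b, hk'.of_mono hm ?_ (pb.lift k' b' hb'.symm) (by simp), ha, ham, pb.w⟩
  rw [pb.w_assoc, E.comp_zero hg, Limits.comp_zero]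

lemma isDeflation_desc_of_isPushout {i : A ⟶ B} {d : B ⟶ C} (h : E.conflation i d) {A' B' : 𝒜}
    {f : A ⟶ A'} {f' : B ⟶ B'} {i' : A' ⟶ B'} (po : IsPushout i f f' i') :
    IsDeflation E (biprod.desc i' f') := by
  obtain ⟨q, hq, hfq⟩ := h.exists_of_isPushout po
  obtain ⟨D, p, p', _, _, pb, hp'⟩ := E.pullback_deflation h q
  obtain ⟨k, hk, hkp'⟩ := hq.exists_of_isPullback pb.flip
  obtain ⟨s, hsp, hsp'⟩ := pb.exists_lift (𝟙 B) f' (by simp [hfq])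
  obtain ⟨σ, rfl⟩ := hk.exists_splitting_of_section s hsp
  have hcomp : σ.isoBinaryBiproduct.inv ≫ p' = biprod.desc i' f' := by ext <;> simp [hkp', hsp']
  exact hcomp ▸ (isDeflation_of_iso σ.isoBinaryBiproduct.symm).comp ⟨_, _, hp'⟩

/- The pushout of `d` along the inflation `j` is again a deflation, because `(z, c)` is one and `z`
factors through `c` after precomposition with `d`. -/
lemma exists_conflation_comp_inflation (hwic : IsWIC E) {i : A ⟶ B} {d : B ⟶ C} {W : 𝒜}
    {j : B ⟶ D} {e : D ⟶ W} (hi : E.conflation i d) (hj : E.conflation j e) :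
    ∃ (C' : 𝒜) (c : D ⟶ C') (z : C ⟶ C') (w : C' ⟶ W),
      E.conflation (i ≫ j) c ∧ E.conflation z w := by
  obtain ⟨C', c, z, _, _, po, -⟩ := E.pushout_inflation hj d
  obtain ⟨w, hw, hcw⟩ := hj.exists_of_isPushout po
  have hcomp : biprod.map d (𝟙 D) ≫ biprod.desc z c = biprod.desc j (𝟙 D) ≫ c := by
    ext <;> simp [po.w]
  obtain ⟨K, k, hk⟩ : IsDeflation E c :=
    IsDeflation.of_comp hwic _ _ (hcomp ▸
      IsDeflation.comp ⟨_, _, hi.biprod_map_id D⟩ (hj.isDeflation_desc_of_isPushout po))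
  have := hi.mono
  have := hj.mono
  have := hw.mono
  obtain ⟨b, hb⟩ := hj.exists_lift k (by
    rw [← hcw, reassoc_of% (E.comp_zero hk), Limits.zero_comp])
  obtain ⟨a, ha⟩ := hi.exists_lift b (by
    rw [← cancel_mono z, Category.assoc, ← po.w, reassoc_of% hb, E.comp_zero hk, Limits.zero_comp])
  refine ⟨C', c, z, w, hk.of_mono (mono_comp _ _) ?_ a (by rw [reassoc_of% ha, hb]), hw⟩
  rw [Category.assoc, po.w, reassoc_of% (E.comp_zero hi), Limits.zero_comp]

end ExactStructure.conflation

namespace IsInflation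

variable {A B C : 𝒜}

lemma comp (hwic : IsWIC E) {f : A ⟶ B} {g : B ⟶ C} (hf : IsInflation E f)
    (hg : IsInflation E g) : IsInflation E (f ≫ g) :=
  let ⟨_, _, hf⟩ := hf
  let ⟨_, _, hg⟩ := hg
  let ⟨_, _, _, _, hfg, _⟩ := hf.exists_conflation_comp_inflation hwic hg
  ⟨_, _, hfg⟩

lemma lift_left (hwic : IsWIC E) {h : A ⟶ B} (hh : IsInflation E h) (g : A ⟶ C) :
    IsInflation E (biprod.lift h g) := by
  obtain ⟨Z, q, hq⟩ := hh
  have hmap : IsInflation E (biprod.map h (𝟙 C)) := ⟨Z, _, hq.map_id_biprod C⟩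
  have hlift : IsInflation E (biprod.lift (𝟙 A) g) := hwic.isInflation _ biprod.fst (by simp)
  have hcomp : biprod.lift (𝟙 A) g ≫ biprod.map h (𝟙 C) = biprod.lift h g := by ext <;> simp
  exact hcomp ▸ hlift.comp hwic hmap

lemma of_lift_zero (hwic : IsWIC E) {g : A ⟶ C}
    (h : IsInflation E (biprod.lift (0 : A ⟶ B) g)) : IsInflation E g := by
  obtain ⟨M, m, hm⟩ := h
  have := hm.epi
  obtain ⟨r, hr⟩ := hm.exists_desc (biprod.fst : B ⊞ C ⟶ B) (by simp)
  obtain ⟨Z, q, hq⟩ := hwic.isInflation (biprod.inl ≫ m) r (by simp [hr])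
  obtain ⟨σ, rfl⟩ := hq.exists_splitting_of_retraction r (by simp [hr])
  have pb : IsPullback (biprod.inr : C ⟶ B ⊞ C) (biprod.inr ≫ m ≫ q) m σ.s := by
    refine IsPullback.mk' ?_ (fun T a b hab _ => (cancel_mono _).1 hab) fun T a b hab => ?_
    · simpa [reassoc_of% hr] using ((biprod.inr ≫ m) ≫= σ.id).symm
    · have ha : a ≫ biprod.fst = 0 := by
        rw [← hr, reassoc_of% hab, σ.s_r, Limits.comp_zero]
      have ha' : (a ≫ biprod.snd) ≫ biprod.inr = a := by ext <;> simp [ha]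
      refine ⟨a ≫ biprod.snd, ha', ?_⟩
      rw [← Category.assoc, ha', reassoc_of% hab, σ.s_g, Category.comp_id]
  obtain ⟨k, hk, hk'⟩ := hm.exists_of_isPullback pb
  have : k = g := by simpa using hk' =≫ biprod.snd
  exact ⟨_, _, this ▸ hk⟩

lemma of_comp (hwic : IsWIC E) (f : A ⟶ B) (g : B ⟶ C) (h : IsInflation E (f ≫ g)) :
    IsInflation E f := by
  have hshear : biprod.lift (f ≫ g) f ≫ (Biprod.unipotentLower (-g)).hom =
      biprod.lift (0 : A ⟶ C) f := by
    ext <;> simp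
  exact of_lift_zero hwic (hshear ▸ (h.lift_left hwic f).comp hwic (isInflation_of_iso _))

end IsInflation

/-! ### Vanishing of `Ext¹` and cotorsion pairs -/

lemma ext1IsZero_iff_exists_section {A C : 𝒜} :
    Ext1IsZero E C A ↔
      ∀ {B : 𝒜} (i : A ⟶ B) (d : B ⟶ C), E.conflation i d → ∃ s : C ⟶ B, s ≫ d = 𝟙 C := by
  constructor
  · intro hz B i d h
    obtain ⟨r, hr⟩ := hz i d h
    obtain ⟨σ, -⟩ := h.exists_splitting_of_retraction r hr
    exact ⟨σ.s, σ.s_g⟩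
  · intro H B i d h
    obtain ⟨s, hs⟩ := H i d h
    obtain ⟨σ, -⟩ := h.exists_splitting_of_section s hs
    exact ⟨σ.r, σ.f_r⟩

namespace Ext1IsZero

variable {A B C Z K : 𝒜}

lemma exists_lift (hz : Ext1IsZero E Z A) {i : A ⟶ B} {d : B ⟶ C} (h : E.conflation i d)
    (g : Z ⟶ C) : ∃ s : Z ⟶ B, s ≫ d = g := by
  obtain ⟨D, p, d', _, _, pb, -⟩ := E.pullback_deflation h g
  obtain ⟨k, hk, -⟩ := h.exists_of_isPullback pb
  obtain ⟨s, hs⟩ := ext1IsZero_iff_exists_section.1 hz k d' hk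
  exact ⟨s ≫ p, by rw [Category.assoc, pb.w, reassoc_of% hs]⟩

lemma exists_extension (hz : Ext1IsZero E C K) {i : A ⟶ B} {d : B ⟶ C} (h : E.conflation i d)
    (g : A ⟶ K) : ∃ s : B ⟶ K, i ≫ s = g := by
  obtain ⟨D, p, i', _, _, po, -⟩ := E.pushout_inflation h g
  obtain ⟨q, hq, -⟩ := h.exists_of_isPushout po
  obtain ⟨r, hr⟩ := hz i' q hq
  exact ⟨p ≫ r, by rw [po.w_assoc, hr, Category.comp_id]⟩

/- The partial section `a` splits the restriction `K ⟶ N ⟶ A` of the conflation `K ⟶ Q ⟶ B`; the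
retraction `N ⟶ K` extends to `Q` because `Q / N ≅ Z`. -/
lemma exists_section_extending (hz : Ext1IsZero E Z K) {i : A ⟶ B} {d : B ⟶ Z}
    (hi : E.conflation i d) {Q : 𝒜} {k : K ⟶ Q} {q : Q ⟶ B} (hq : E.conflation k q)
    (a : A ⟶ Q) (ha : a ≫ q = i) : ∃ s : B ⟶ Q, i ≫ s = a ∧ s ≫ q = 𝟙 B := by
  have := hi.mono
  obtain ⟨N, n, α, β, hn, hα, hαn, hβ⟩ := hq.exists_conflation_comp hi
  obtain ⟨a', ha'⟩ := hn.exists_lift a (by rw [reassoc_of% ha, E.comp_zero hi])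
  have ha'β : a' ≫ β = 𝟙 A := by
    rw [← cancel_mono i, Category.assoc, ← hβ, reassoc_of% ha', ha, Category.id_comp]
  obtain ⟨σ, rfl⟩ := hα.exists_splitting_of_section a' ha'β
  obtain ⟨r, hr⟩ := hz.exists_extension hn σ.r
  obtain ⟨τ, rfl⟩ := hq.exists_splitting_of_retraction r (by
    rw [← hαn, Category.assoc, hr, σ.f_r])
  have har : a ≫ τ.r = 0 := by rw [← ha', Category.assoc, hr, σ.s_r]
  refine ⟨τ.s, ?_, τ.s_g⟩
  simpa [reassoc_of% har, reassoc_of% ha] using a ≫= τ.id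

lemma hasLiftingProperty (hz : Ext1IsZero E Z K) {i : A ⟶ B} {d : B ⟶ Z}
    (hi : E.conflation i d) {M N : 𝒜} {k : K ⟶ M} {p : M ⟶ N} (hp : E.conflation k p) :
    HasLiftingProperty i p := by
  refine ⟨fun {a b} sq => ?_⟩
  obtain ⟨Q, f, q, _, _, pb, -⟩ := E.pullback_deflation hp b
  obtain ⟨k', hk', -⟩ := hp.exists_of_isPullback pb
  obtain ⟨a', ha'f, ha'q⟩ := pb.exists_lift a i sq.w
  obtain ⟨s, his, hsq⟩ := hz.exists_section_extending hi hk' a' ha'q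
  exact ⟨⟨⟨s ≫ f, by rw [reassoc_of% his, ha'f], by rw [Category.assoc, pb.w, reassoc_of% hsq]⟩⟩⟩

end Ext1IsZero

variable {X Y : Set 𝒜}

namespace IsCotorsionPair

variable {A B C : 𝒜}

lemma ext1IsZero (hcp : IsCotorsionPair E X Y) (hA : A ∈ X) (hB : B ∈ Y) : Ext1IsZero E A B :=
  (hcp.1 A).1 hA B hB

lemma left_of_retract (hcp : IsCotorsionPair E X Y) (r : Retract A B) (hB : B ∈ X) : A ∈ X := by
  refine (hcp.1 A).2 fun T hT => ext1IsZero_iff_exists_section.2 fun {M} j e hje => ?_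
  obtain ⟨s, hs⟩ := Ext1IsZero.exists_lift (hcp.ext1IsZero hB hT) hje r.r
  exact ⟨r.i ≫ s, by rw [Category.assoc, hs, r.retract]⟩

lemma right_of_retract (hcp : IsCotorsionPair E X Y) (r : Retract A B) (hB : B ∈ Y) : A ∈ Y := by
  refine (hcp.2 A).2 fun T hT M j e hje => ?_
  obtain ⟨s, hs⟩ := Ext1IsZero.exists_extension (hcp.ext1IsZero hT hB) hje r.i
  exact ⟨s ≫ r.r, by rw [reassoc_of% hs, r.retract]⟩

lemma left_of_extension (hcp : IsCotorsionPair E X Y) {i : A ⟶ B} {d : B ⟶ C}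
    (h : E.conflation i d) (hA : A ∈ X) (hC : C ∈ X) : B ∈ X := by
  refine (hcp.1 B).2 fun T hT => ext1IsZero_iff_exists_section.2 fun {M} j e hje => ?_
  obtain ⟨a, ha⟩ := Ext1IsZero.exists_lift (hcp.ext1IsZero hA hT) hje i
  have := Ext1IsZero.hasLiftingProperty (hcp.ext1IsZero hC hT) h hje
  have sq : CommSq a i e (𝟙 B) := ⟨by simp [ha]⟩
  exact ⟨sq.lift, sq.fac_right⟩

lemma right_of_extension (hcp : IsCotorsionPair E X Y) {i : A ⟶ B} {d : B ⟶ C}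
    (h : E.conflation i d) (hA : A ∈ Y) (hC : C ∈ Y) : B ∈ Y := by
  refine (hcp.2 B).2 fun T hT M j e hje => ?_
  obtain ⟨b, hb⟩ := Ext1IsZero.exists_extension (hcp.ext1IsZero hT hC) hje d
  have := Ext1IsZero.hasLiftingProperty (hcp.ext1IsZero hT hA) hje h
  have sq : CommSq (𝟙 B) j d b := ⟨by simp [hb]⟩
  exact ⟨sq.lift, sq.fac_left⟩

lemma zero_mem (hcp : IsCotorsionPair E X Y) : (0 : 𝒜) ∈ X ∩ Y :=
  ⟨(hcp.1 0).2 fun _ _ => ext1IsZero_iff_exists_section.2 fun _ _ _ =>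
      ⟨0, (isZero_zero 𝒜).eq_of_src _ _⟩,
    (hcp.2 0).2 fun _ _ _ _ _ _ => ⟨0, (isZero_zero 𝒜).eq_of_src _ _⟩⟩

lemma biprod_mem (hcp : IsCotorsionPair E X Y) (hA : A ∈ X ∩ Y) (hB : B ∈ X ∩ Y) :
    (A ⊞ B) ∈ X ∩ Y :=
  ⟨hcp.left_of_extension (conflation_inl_snd A B) hA.1 hB.1,
    hcp.right_of_extension (conflation_inl_snd A B) hA.2 hB.2⟩

/- Embed `T ∈ X` into some `I ∈ X ∩ Y` with cokernel in `X`: the obstruction `T ⟶ L` to extending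
`k` along `A ⟶ N` inside `K` extends to `I`, hence lifts to `M`. -/
lemma right_of_kernel (hcp : IsCotorsionPair E X Y) (hcomp : IsCompleteCP E X Y)
    (hproj : ∀ W ∈ X ∩ Y, IsProjObj E W) {K M L : 𝒜} {k : K ⟶ M} {p : M ⟶ L}
    (h : E.conflation k p) (hM : M ∈ Y) (hL : L ∈ Y) : K ∈ Y := by
  refine (hcp.2 K).2 fun T hT N j e hje => ?_
  have := h.mono
  obtain ⟨φ, hφ⟩ := Ext1IsZero.exists_extension (hcp.ext1IsZero hT hM) hje k
  obtain ⟨ψ, hψ⟩ := hje.exists_desc (φ ≫ p) (by rw [reassoc_of% hφ, E.comp_zero h])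
  obtain ⟨-, I, T', i, q, hiq, hT', hI⟩ := hcomp T
  obtain ⟨χ, hχ⟩ := Ext1IsZero.exists_extension (hcp.ext1IsZero hT' hL) hiq ψ
  obtain ⟨ξ, hξ⟩ := hproj I ⟨hcp.left_of_extension hiq hT hT', hI⟩ p ⟨_, _, h⟩ χ
  obtain ⟨r, hr⟩ := h.exists_lift (φ - e ≫ i ≫ ξ) (by simp [hξ, hχ, hψ])
  refine ⟨r, ?_⟩
  rw [← cancel_mono k, Category.assoc, hr]
  simp [hφ, reassoc_of% (E.comp_zero hje)]

end IsCotorsionPair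

/-! ### Projectivity of `X ∩ Y` -/

/-- A class `ω` has enough objects if every object is the target of a deflation whose source
lies in `ω`. For the class of projectives this is `HasEnoughProj`. -/
def HasEnough (E : ExactStructure 𝒜) (ω : Set 𝒜) : Prop :=
  ∀ B : 𝒜, ∃ W ∈ ω, ∃ t : W ⟶ B, IsDeflation E t

lemma IsCotorsionPair.hasEnoughProj_and_inter_eq_iff (hcp : IsCotorsionPair E X Y) :
    (HasEnoughProj E ∧ X ∩ Y = {P : 𝒜 | IsProjObj E P}) ↔
      (∀ W ∈ X ∩ Y, IsProjObj E W) ∧ HasEnough E (X ∩ Y) := by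
  constructor
  · rintro ⟨henough, heq⟩
    rw [heq]
    refine ⟨fun _ hW => hW, fun B => ?_⟩
    obtain ⟨P, t, hP, ht⟩ := henough B
    exact ⟨P, hP, t, ht⟩
  · rintro ⟨hproj, henough⟩
    refine ⟨fun B => ?_, Set.Subset.antisymm hproj fun P (hP : IsProjObj E P) => ?_⟩
    · obtain ⟨W, hW, t, ht⟩ := henough B
      exact ⟨W, t, hproj W hW, ht⟩
    · obtain ⟨W, hW, t, ht⟩ := henough P
      obtain ⟨s, hs⟩ := hP t ht (𝟙 P)
      exact ⟨hcp.left_of_retract ⟨s, t, hs⟩ hW.1, hcp.right_of_retract ⟨s, t, hs⟩ hW.2⟩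

lemma fibO_iff_isDeflation (hwic : IsWIC E) {ω : Set 𝒜} (hproj : ∀ W ∈ ω, IsProjObj E W)
    (henough : HasEnough E ω) {A B : 𝒜} (f : A ⟶ B) : FibO ω f ↔ IsDeflation E f := by
  refine ⟨fun hf => ?_, fun hf W hW => hproj W hW f hf⟩
  obtain ⟨W, hW, t, ht⟩ := henough B
  obtain ⟨h, rfl⟩ := hf W hW t
  exact ht.of_comp hwic h f

namespace ExactStructure.conflation

lemma exists_conflation_desc_comp {K M B Q : 𝒜} {k : K ⟶ M} {p : M ⟶ B} (h : E.conflation k p)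
    (u : Q ⟶ M) : ∃ l : K ⊞ Q ⟶ M ⊞ Q, E.conflation l (biprod.desc p (u ≫ p)) :=
  ⟨biprod.map k (𝟙 Q) ≫ (Biprod.unipotentLower (-u)).hom,
    E.conflation_iso (Iso.refl _) (Biprod.unipotentLower (-u)) (Iso.refl B) (h.map_id_biprod Q)
      (by simp) (by ext <;> simp [Biprod.ofComponents])⟩

/- Schanuel's lemma relative to `f`: both sides are the kernel of `(f, t, t')`. -/
lemma nonempty_biprod_iso {A B P P' K K' : 𝒜} {f : A ⟶ B} {t : P ⟶ B} {t' : P' ⟶ B}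
    {k : K ⟶ A ⊞ P} {k' : K' ⟶ A ⊞ P'} (h : E.conflation k (biprod.desc f t))
    (h' : E.conflation k' (biprod.desc f t')) (hP : IsProjObj E P) (hP' : IsProjObj E P') :
    Nonempty ((K ⊞ P') ≅ (K' ⊞ P)) := by
  obtain ⟨u, rfl⟩ := hP' _ ⟨_, _, h⟩ t'
  obtain ⟨u', hu'⟩ := hP _ ⟨_, _, h'⟩ t
  obtain ⟨l, hl⟩ := h.exists_conflation_desc_comp u
  obtain ⟨l', hl'⟩ := h'.exists_conflation_desc_comp u'
  rw [hu'] at hl'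
  let e : (A ⊞ P') ⊞ P ≅ (A ⊞ P) ⊞ P' :=
    biprod.associator A P' P ≪≫ biprod.mapIso (Iso.refl A) (biprod.braiding P' P) ≪≫
      (biprod.associator A P P').symm
  exact hl.nonempty_kernel_iso
    (E.conflation_iso (Iso.refl _) e (Iso.refl B) hl' (i' := l' ≫ e.hom) (by simp)
      (by ext <;> simp [e]))

end ExactStructure.conflation

namespace IsCotorsionPair

variable {A B C : 𝒜}

lemma weqO_iff_of_conflation_desc (hcp : IsCotorsionPair E X Y)
    (hproj : ∀ W ∈ X ∩ Y, IsProjObj E W) {f : A ⟶ B} {P : 𝒜} (hP : P ∈ X ∩ Y) {t : P ⟶ B} {K : 𝒜}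
    {k : K ⟶ A ⊞ P} (h : E.conflation k (biprod.desc f t)) :
    WeqO E (X ∩ Y) Y f ↔ K ∈ Y := by
  refine ⟨?_, fun hK => ⟨P, hP, t, K, k, h, hK⟩⟩
  rintro ⟨P', hP', t', K', k', h', hK'⟩
  obtain ⟨e⟩ := h.nonempty_biprod_iso h' (hproj P hP) (hproj P' hP')
  have hmem : (K' ⊞ P) ∈ Y := hcp.right_of_extension (conflation_inl_snd K' P) hK' hP.2
  exact hcp.right_of_retract ((⟨biprod.inl, biprod.fst, by simp⟩ : Retract K (K ⊞ P')).trans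
    (.ofIso e)) hmem

lemma weqO_iff_of_conflation (hcp : IsCotorsionPair E X Y)
    (hproj : ∀ W ∈ X ∩ Y, IsProjObj E W) {f : A ⟶ B} {K : 𝒜} {k : K ⟶ A}
    (h : E.conflation k f) : WeqO E (X ∩ Y) Y f ↔ K ∈ Y :=
  hcp.weqO_iff_of_conflation_desc hproj hcp.zero_mem h.desc_zero

lemma exists_conflation_weqO_iff (hcp : IsCotorsionPair E X Y) (hwic : IsWIC E)
    (hproj : ∀ W ∈ X ∩ Y, IsProjObj E W) (henough : HasEnough E (X ∩ Y)) (f : A ⟶ B) (g : B ⟶ C) :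
    ∃ (K M L : 𝒜) (a : K ⟶ M) (b : M ⟶ L), E.conflation a b ∧
      (WeqO E (X ∩ Y) Y f ↔ K ∈ Y) ∧ (WeqO E (X ∩ Y) Y (f ≫ g) ↔ M ∈ Y) ∧
      (WeqO E (X ∩ Y) Y g ↔ L ∈ Y) := by
  obtain ⟨P, hP, t, ht⟩ := henough B
  obtain ⟨Q, hQ, u, hu⟩ := henough C
  obtain ⟨K, k, hk⟩ := ht.desc_right hwic f
  obtain ⟨L, l, hl⟩ := hu.desc_right hwic g
  obtain ⟨M, m, a, b, hm, hab, -⟩ := (hk.biprod_map_id Q).exists_conflation_comp hl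
  have hm' : E.conflation (m ≫ (biprod.associator A P Q).hom)
      (biprod.desc (f ≫ g) (biprod.desc (t ≫ g) u)) :=
    E.conflation_iso (Iso.refl _) (biprod.associator A P Q) (Iso.refl _) hm (by simp)
      (by ext <;> simp)
  exact ⟨K, M, L, a, b, hab, hcp.weqO_iff_of_conflation_desc hproj hP hk,
    hcp.weqO_iff_of_conflation_desc hproj (hcp.biprod_mem hP hQ) hm',
    hcp.weqO_iff_of_conflation_desc hproj hQ hl⟩

end IsCotorsionPair

/-! ### The model structure -/

namespace IsRetractMor

variable {A B A' B' : 𝒜} {f : A ⟶ B} {g : A' ⟶ B'}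

lemma isInflation (hwic : IsWIC E) (h : IsRetractMor g f) (hf : IsInflation E f) :
    IsInflation E g := by
  obtain ⟨φ₁, ψ₁, φ₂, ψ₂, hφψ₁, -, hφ, -⟩ := h
  have hcomp := (hwic.isInflation φ₁ ψ₁ hφψ₁).comp hwic hf
  rw [hφ] at hcomp
  exact hcomp.of_comp hwic g φ₂

lemma coFibO (hwic : IsWIC E) (hcp : IsCotorsionPair E X Y) (h : IsRetractMor g f)
    (hf : CoFibO E X f) : CoFibO E X g := by
  obtain ⟨Z, d, hd, hZ⟩ := hf
  obtain ⟨Z', d', hd'⟩ := h.isInflation hwic ⟨Z, d, hd⟩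
  obtain ⟨r⟩ := hd.nonempty_retract_cokernel hd' h
  exact ⟨Z', d', hd', hcp.left_of_retract r hZ⟩

omit [Preadditive 𝒜] [HasZeroObject 𝒜] [HasBinaryBiproducts 𝒜] in
lemma fibO {ω : Set 𝒜} (h : IsRetractMor g f) (hf : FibO ω f) : FibO ω g := by
  obtain ⟨φ₁, ψ₁, φ₂, ψ₂, -, hφψ₂, -, hψ⟩ := h
  intro W hW w
  obtain ⟨v, hv⟩ := hf W hW (w ≫ φ₂)
  exact ⟨v ≫ ψ₁, by rw [Category.assoc, ← hψ, reassoc_of% hv, hφψ₂, Category.comp_id]⟩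

/- With `(g, t')` and `t` deflations, `(g, t')` is a retract of `(f, t' ≫ φ₂, t)`. -/
lemma weqO (hwic : IsWIC E) (hcp : IsCotorsionPair E X Y) (hproj : ∀ W ∈ X ∩ Y, IsProjObj E W)
    (henough : HasEnough E (X ∩ Y)) (h : IsRetractMor g f) (hf : WeqO E (X ∩ Y) Y f) :
    WeqO E (X ∩ Y) Y g := by
  obtain ⟨φ₁, ψ₁, φ₂, ψ₂, hφψ₁, hφψ₂, hφ, hψ⟩ := h
  obtain ⟨P', hP', t', ht'⟩ := henough B'
  obtain ⟨P, hP, t, ht⟩ := henough B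
  obtain ⟨K, k, hk⟩ := (ht.desc_right hwic (t' ≫ φ₂)).desc_right hwic f
  obtain ⟨K', k', hk'⟩ := ht'.desc_right hwic g
  obtain ⟨u, hu⟩ := hproj P hP t' ht' (t ≫ ψ₂)
  have hdesc : IsRetractMor (biprod.desc g t') (biprod.desc f (biprod.desc (t' ≫ φ₂) t)) :=
    ⟨biprod.map φ₁ biprod.inl, biprod.map ψ₁ (biprod.desc (𝟙 P') u), φ₂, ψ₂,
      by ext <;> simp [hφψ₁], hφψ₂, by ext <;> simp [hφ], by ext <;> simp [hψ, hu, hφψ₂]⟩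
  obtain ⟨r⟩ := hk.nonempty_retract_kernel hk' hdesc
  have hK : K ∈ Y := (hcp.weqO_iff_of_conflation_desc hproj (hcp.biprod_mem hP' hP) hk).1 hf
  exact (hcp.weqO_iff_of_conflation_desc hproj hP' hk').2 (hcp.right_of_retract r hK)

end IsRetractMor

lemma coFibO_inl (A : 𝒜) {P : 𝒜} (hP : P ∈ X) : CoFibO E X (biprod.inl : A ⟶ A ⊞ P) :=
  ⟨P, biprod.snd, conflation_inl_snd A P, hP⟩

lemma IsCotorsionPair.weqO_inl (hcp : IsCotorsionPair E X Y) (A : 𝒜) {P : 𝒜} (hP : P ∈ X ∩ Y) :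
    WeqO E (X ∩ Y) Y (biprod.inl : A ⟶ A ⊞ P) := by
  have hid : biprod.desc (biprod.inl : A ⟶ A ⊞ P) biprod.inr = 𝟙 (A ⊞ P) := by ext <;> simp
  exact ⟨P, hP, biprod.inr, 0, 0, hid ▸ E.id_deflation (A ⊞ P), hcp.zero_mem.2⟩

lemma IsCotorsionPair.coFibO_comp (hcp : IsCotorsionPair E X Y) (hwic : IsWIC E) {A B C : 𝒜}
    {f : A ⟶ B} {g : B ⟶ C} (hf : CoFibO E X f) (hg : CoFibO E X g) : CoFibO E X (f ≫ g) := by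
  obtain ⟨Z, d, hd, hZ⟩ := hf
  obtain ⟨W, e, he, hW⟩ := hg
  obtain ⟨C', c, z, w, hc, hzw⟩ := hd.exists_conflation_comp_inflation hwic he
  exact ⟨C', c, hc, hcp.left_of_extension hzw hZ hW⟩

lemma IsDeflation.exists_coFibO_comp_tFibO (hcomp : IsCompleteCP E X Y) {A B : 𝒜} {p : A ⟶ B}
    (hp : IsDeflation E p) :
    ∃ (D : 𝒜) (j : A ⟶ D) (q : D ⟶ B), j ≫ q = p ∧ CoFibO E X j ∧ TFibO E Y q := by
  obtain ⟨K, k, hk⟩ := hp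
  obtain ⟨-, Y₁, X₁, i, d, hid, hX₁, hY₁⟩ := hcomp K
  obtain ⟨D, j, i', _, _, po, -⟩ := E.pushout_inflation hk i
  obtain ⟨q, hq, hjq⟩ := hk.exists_of_isPushout po
  obtain ⟨e, he, -⟩ := hid.exists_of_isPushout po.flip
  exact ⟨D, j, q, hjq, ⟨X₁, e, he, hX₁⟩, ⟨Y₁, i', hq, hY₁⟩⟩

omit [HasZeroObject 𝒜] [HasBinaryBiproducts 𝒜] in
lemma hasLiftingProperty_of_splitting {ω : Set 𝒜} {S : ShortComplex 𝒜} (σ : S.Splitting)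
    (hS : S.X₃ ∈ ω) {M N : 𝒜} {p : M ⟶ N} (hp : FibO ω p) : HasLiftingProperty S.f p := by
  refine ⟨fun {a b} sq => ?_⟩
  obtain ⟨h, hh⟩ := hp S.X₃ hS (σ.s ≫ b)
  refine ⟨⟨⟨σ.r ≫ a + S.g ≫ h, by simp, ?_⟩⟩⟩
  simpa [sq.w, hh] using σ.id =≫ b

lemma ExactStructure.conflation.isPullback_snd_desc {A B Z P : 𝒜} {i : A ⟶ B} {d : B ⟶ Z}
    (h : E.conflation i d) (t : P ⟶ B) :
    IsPullback (biprod.snd : A ⊞ P ⟶ P) (biprod.desc i t) (t ≫ d) d := by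
  have := h.mono
  refine IsPullback.mk' (by ext <;> simp [E.comp_zero h]) (fun T a b hsnd hdesc => ?_)
    fun T a b hab => ?_
  · refine biprod.hom_ext _ _ ((cancel_mono i).1 ?_) hsnd
    simpa [biprod.desc_eq, reassoc_of% hsnd] using hdesc
  · obtain ⟨c, hc⟩ := h.exists_lift (b - a ≫ t) (by simp [hab])
    exact ⟨biprod.lift c a, by simp, by simp [hc]⟩

lemma IsCotorsionPair.cokernel_mem_of_weqO (hcp : IsCotorsionPair E X Y) (hwic : IsWIC E)
    (hher : IsHereditaryCP E X Y) {A B Z : 𝒜} {i : A ⟶ B} {d : B ⟶ Z} (h : E.conflation i d)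
    (hi : WeqO E (X ∩ Y) Y i) : Z ∈ Y := by
  obtain ⟨P, hP, t, K, k, hk, hK⟩ := hi
  have pb := h.isPullback_snd_desc t
  have htd : IsDeflation E (biprod.snd ≫ t ≫ d : A ⊞ P ⟶ Z) :=
    pb.w ▸ IsDeflation.comp ⟨K, k, hk⟩ ⟨A, i, h⟩
  obtain ⟨L, l, hl⟩ := htd.of_comp hwic
  obtain ⟨k', hk', -⟩ := hl.exists_of_isPullback pb
  obtain ⟨e⟩ := hk'.nonempty_kernel_iso hk
  exact hher.2 l (t ≫ d) hl (hcp.right_of_retract (.ofIso e) hK) hP.2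

section Lifting

variable {A B M N : 𝒜} {i : A ⟶ B} {p : M ⟶ N}

lemma IsCotorsionPair.hasLiftingProperty_of_weqO_left (hcp : IsCotorsionPair E X Y)
    (hwic : IsWIC E) (hher : IsHereditaryCP E X Y) (hproj : ∀ W ∈ X ∩ Y, IsProjObj E W)
    (hi : CoFibO E X i) (hiw : WeqO E (X ∩ Y) Y i) (hp : FibO (X ∩ Y) p) :
    HasLiftingProperty i p := by
  obtain ⟨Z, d, hd, hZ⟩ := hi
  have hZω : Z ∈ X ∩ Y := ⟨hZ, hcp.cokernel_mem_of_weqO hwic hher hd hiw⟩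
  obtain ⟨s, hs⟩ := hproj Z hZω d ⟨_, _, hd⟩ (𝟙 Z)
  obtain ⟨σ, -⟩ := hd.exists_splitting_of_section s hs
  exact hasLiftingProperty_of_splitting σ hZω hp

lemma IsCotorsionPair.hasLiftingProperty_of_weqO_right (hcp : IsCotorsionPair E X Y)
    (hproj : ∀ W ∈ X ∩ Y, IsProjObj E W) (hi : CoFibO E X i) (hp : IsDeflation E p)
    (hpw : WeqO E (X ∩ Y) Y p) : HasLiftingProperty i p := by
  obtain ⟨Z, d, hd, hZ⟩ := hi
  obtain ⟨K, k, hk⟩ := hp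
  have hK : K ∈ Y := (hcp.weqO_iff_of_conflation hproj hk).1 hpw
  exact Ext1IsZero.hasLiftingProperty (hcp.ext1IsZero hZ hK) hd hk

end Lifting

section Factorization

variable {A B : 𝒜}

lemma IsCotorsionPair.exists_trivial_coFibO_comp_isDeflation (hcp : IsCotorsionPair E X Y)
    (hwic : IsWIC E) (henough : HasEnough E (X ∩ Y)) (f : A ⟶ B) :
    ∃ (Z : 𝒜) (i : A ⟶ Z) (p : Z ⟶ B),
      i ≫ p = f ∧ CoFibO E X i ∧ WeqO E (X ∩ Y) Y i ∧ IsDeflation E p := by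
  obtain ⟨P, hP, t, ht⟩ := henough B
  exact ⟨A ⊞ P, biprod.inl, biprod.desc f t, by simp, coFibO_inl A hP.1, hcp.weqO_inl A hP,
    ht.desc_right hwic f⟩

lemma IsCotorsionPair.exists_coFibO_comp_tFibO (hcp : IsCotorsionPair E X Y) (hwic : IsWIC E)
    (hcomp : IsCompleteCP E X Y) (henough : HasEnough E (X ∩ Y)) (f : A ⟶ B) :
    ∃ (Z : 𝒜) (j : A ⟶ Z) (q : Z ⟶ B), j ≫ q = f ∧ CoFibO E X j ∧ TFibO E Y q := by
  obtain ⟨Z, i, p, rfl, hi, -, hp⟩ := hcp.exists_trivial_coFibO_comp_isDeflation hwic henough f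
  obtain ⟨D, j, q, rfl, hj, hq⟩ := hp.exists_coFibO_comp_tFibO hcomp
  exact ⟨D, i ≫ j, q, Category.assoc _ _ _, hcp.coFibO_comp hwic hi hj, hq⟩

end Factorization

lemma IsCotorsionPair.isModelStructure (hcp : IsCotorsionPair E X Y) (hwic : IsWIC E)
    (hcomp : IsCompleteCP E X Y) (hher : IsHereditaryCP E X Y)
    (hproj : ∀ W ∈ X ∩ Y, IsProjObj E W) (henough : HasEnough E (X ∩ Y)) :
    IsModelStructure (CoFibO E X) (FibO (X ∩ Y)) (WeqO E (X ∩ Y) Y) where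
  weq_comp f g hf hg := by
    obtain ⟨K, M, L, a, b, hab, hfK, hfgM, hgL⟩ :=
      hcp.exists_conflation_weqO_iff hwic hproj henough f g
    exact hfgM.2 (hcp.right_of_extension hab (hfK.1 hf) (hgL.1 hg))
  weq_cancel_left f g hf hfg := by
    obtain ⟨K, M, L, a, b, hab, hfK, hfgM, hgL⟩ :=
      hcp.exists_conflation_weqO_iff hwic hproj henough f g
    exact hgL.2 (hher.2 a b hab (hfK.1 hf) (hfgM.1 hfg))
  weq_cancel_right f g hg hfg := by
    obtain ⟨K, M, L, a, b, hab, hfK, hfgM, hgL⟩ :=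
      hcp.exists_conflation_weqO_iff hwic hproj henough f g
    exact hfK.2 (hcp.right_of_kernel hcomp hproj hab (hfgM.1 hfg) (hgL.1 hg))
  retract_cofib _ _ h hf := h.coFibO hwic hcp hf
  retract_fib _ _ h hf := h.fibO hf
  retract_weq _ _ h hf := h.weqO hwic hcp hproj henough hf
  lifting_left i p a b hi hiw hp hab :=
    have := hcp.hasLiftingProperty_of_weqO_left hwic hher hproj hi hiw hp
    have sq : CommSq a i p b := ⟨hab⟩
    ⟨sq.lift, sq.fac_left, sq.fac_right⟩
  lifting_right i p a b hi hp hpw hab :=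
    have := hcp.hasLiftingProperty_of_weqO_right hproj hi
      ((fibO_iff_isDeflation hwic hproj henough p).1 hp) hpw
    have sq : CommSq a i p b := ⟨hab⟩
    ⟨sq.lift, sq.fac_left, sq.fac_right⟩
  fact_left f := by
    obtain ⟨Z, i, p, hip, hi, hiw, hp⟩ :=
      hcp.exists_trivial_coFibO_comp_isDeflation hwic henough f
    exact ⟨Z, i, p, hip, hi, hiw, (fibO_iff_isDeflation hwic hproj henough p).2 hp⟩
  fact_right f := by
    obtain ⟨Z, j, q, hjq, hj, K, k, hk, hK⟩ :=
      hcp.exists_coFibO_comp_tFibO hwic hcomp henough f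
    exact ⟨Z, j, q, hjq, hj, (fibO_iff_isDeflation hwic hproj henough q).2 ⟨K, k, hk⟩,
      (hcp.weqO_iff_of_conflation hproj hk).2 hK⟩

/-! ### Exactness -/

lemma IsCotorsionPair.cofibrant_iff (hcp : IsCotorsionPair E X Y) (Z : 𝒜) :
    Cofibrant (CoFibO E X) Z ↔ Z ∈ X := by
  refine ⟨?_, fun hZ => ⟨Z, 𝟙 Z, E.id_deflation Z, hZ⟩⟩
  rintro ⟨Z', d, h, hZ'⟩
  obtain ⟨r⟩ := h.nonempty_retract_of_zero
  exact hcp.left_of_retract r hZ'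

lemma IsCotorsionPair.cofibsAreInflWithCofibCoker (hcp : IsCotorsionPair E X Y) :
    CofibsAreInflWithCofibCoker E (CoFibO E X) := by
  simp only [CofibsAreInflWithCofibCoker, hcp.cofibrant_iff]
  exact fun _ => Iff.rfl

omit [HasBinaryBiproducts 𝒜] in
lemma fibrant_fibO (ω : Set 𝒜) (A : 𝒜) : Fibrant (FibO ω) A :=
  fun _ _ _ => ⟨0, (isZero_zero 𝒜).eq_of_tgt _ _⟩

lemma fibsAreDeflWithFibKer_iff (ω : Set 𝒜) :
    FibsAreDeflWithFibKer E (FibO ω) ↔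
      ∀ {A B : 𝒜} (f : A ⟶ B), FibO ω f ↔ IsDeflation E f := by
  simp only [FibsAreDeflWithFibKer, fibrant_fibO, and_true, IsDeflation]

lemma IsModelStructure.hasEnough (hwic : IsWIC E) {ω : Set 𝒜} {C : MorphismProperty 𝒜}
    (hmodel : IsModelStructure C (FibO ω) (WeqO E ω Y))
    (hfib : ∀ {A B : 𝒜} (f : A ⟶ B), FibO ω f → IsDeflation E f) : HasEnough E ω := by
  intro B
  obtain ⟨Z, i, p, -, -, ⟨W, hW, t, K, k, hk, -⟩, hp⟩ := hmodel.fact_left (0 : (0 : 𝒜) ⟶ B)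
  have hi : i = 0 := (isZero_zero 𝒜).eq_of_src _ _
  subst hi
  exact ⟨W, hW, t ≫ p, (IsDeflation.of_desc_zero hwic ⟨K, k, hk⟩).comp (hfib p hp)⟩

end ExactCategories

theorem stmt_14_general (E : ExactStructure 𝒜) (hwic : IsWIC E) (X Y : Set 𝒜)
    (hcp : IsCotorsionPair E X Y) (hcomp : IsCompleteCP E X Y) (hher : IsHereditaryCP E X Y) :
    IsExactModelStr E (CoFibO E X) (FibO (X ∩ Y)) (WeqO E (X ∩ Y) Y) ↔
      (HasEnoughProj E ∧ X ∩ Y = {P : 𝒜 | IsProjObj E P}) := by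
  rw [hcp.hasEnoughProj_and_inter_eq_iff, IsExactModelStr, fibsAreDeflWithFibKer_iff]
  constructor
  · rintro ⟨hmodel, -, hfib⟩
    exact ⟨fun W hW _ _ d hd => (hfib d).2 hd W hW,
      hmodel.hasEnough hwic fun f => (hfib f).1⟩
  · rintro ⟨hproj, henough⟩
    exact ⟨hcp.isModelStructure hwic hcomp hher hproj henough, hcp.cofibsAreInflWithCofibCoker,
      fibO_iff_isDeflation hwic hproj henough⟩

/-- The `ω`-model structure is exact iff `𝒜` has enough projectives and
`ω` is the class of projective objects. -/
theorem stmt_14 (E : ExactStructure 𝒜) (hwic : IsWIC E) (X Y : Set 𝒜)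
    (hcp : IsCotorsionPair E X Y) (hcomp : IsCompleteCP E X Y)
    (hher : IsHereditaryCP E X Y) (hcf : IsContravariantlyFinite (X ∩ Y)) :
    IsExactModelStr E (CoFibO E X) (FibO (X ∩ Y)) (WeqO E (X ∩ Y) Y) ↔
      (HasEnoughProj E ∧ X ∩ Y = {P : 𝒜 | IsProjObj E P}) := by
  exact stmt_14_general E hwic X Y hcp hcomp hher
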